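/- For any matrix G ∈ ℝ^{n₁×n₂} and any τ ∈ [1, n₁], sup{⟨G, X⟩ : X ∈ ℝ^{n₁×n₂}, ‖X‖_F = 1, ‖X‖_*² ≤ τ} ≤ √τ · ‖G‖₂; consequently, if the entries of G are i.i.d. N(0,1), then E[sup{⟨G, X⟩ : ‖X‖_F = 1, ‖X‖_*² ≤ τ}] ≤ √τ · E‖G‖₂ ≤ 2√τ·√n₂. -/

import Mathlib

open scoped BigOperators

noncomputable section

/-- Frobenius norm of a real matrix. -/
def frobNorm {n₁ n₂ : ℕ} (X : Matrix (Fin n₁) (Fin n₂) ℝ) : ℝ :=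
  Real.sqrt (∑ i, ∑ j, (X i j) ^ 2)

/-- Singular values of a real matrix: square roots of eigenvalues of `X * Xᴴ`. -/
def singVals {n₁ n₂ : ℕ} (X : Matrix (Fin n₁) (Fin n₂) ℝ) : Fin n₁ → ℝ :=
  fun i => Real.sqrt ((Matrix.isHermitian_mul_conjTranspose_self X).eigenvalues i)

/-- Nuclear norm: sum of singular values. -/
def nuclearNorm {n₁ n₂ : ℕ} (X : Matrix (Fin n₁) (Fin n₂) ℝ) : ℝ :=
  ∑ i, singVals X i

/-- Operator norm: largest singular value. -/
def matOpNorm {n₁ n₂ : ℕ} (X : Matrix (Fin n₁) (Fin n₂) ℝ) : ℝ :=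
  ⨆ i, singVals X i

/-- ℓ*-rank. -/
def lstarRank {n₁ n₂ : ℕ} (X : Matrix (Fin n₁) (Fin n₂) ℝ) : ℝ :=
  nuclearNorm X ^ 2 / frobNorm X ^ 2

/-- Euclidean norm of a vector. -/
def vnorm {m : ℕ} (v : Fin m → ℝ) : ℝ :=
  Real.sqrt (∑ k, (v k) ^ 2)

/-- Matrix inner product. -/
def matInner {n₁ n₂ : ℕ} (X Y : Matrix (Fin n₁) (Fin n₂) ℝ) : ℝ :=
  (X.transpose * Y).trace

def cmsvMin {n₁ n₂ m : ℕ} (A : Matrix (Fin n₁) (Fin n₂) ℝ → (Fin m → ℝ)) (τ : ℝ) : ℝ :=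
  sInf {c | ∃ X : Matrix (Fin n₁) (Fin n₂) ℝ, X ≠ 0 ∧ lstarRank X ≤ τ ∧ c = vnorm (A X) / frobNorm X}

def cmsvMax {n₁ n₂ m : ℕ} (A : Matrix (Fin n₁) (Fin n₂) ℝ → (Fin m → ℝ)) (τ : ℝ) : ℝ :=
  sSup {c | ∃ X : Matrix (Fin n₁) (Fin n₂) ℝ, X ≠ 0 ∧ lstarRank X ≤ τ ∧ c = vnorm (A X) / frobNorm X}

def rcsvMin {n₁ n₂ m : ℕ} (A : Matrix (Fin n₁) (Fin n₂) ℝ → (Fin m → ℝ)) (r : ℕ) : ℝ :=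
  sInf {c | ∃ X : Matrix (Fin n₁) (Fin n₂) ℝ, X ≠ 0 ∧ X.rank ≤ r ∧ c = vnorm (A X) / frobNorm X}

def rcsvMax {n₁ n₂ m : ℕ} (A : Matrix (Fin n₁) (Fin n₂) ℝ → (Fin m → ℝ)) (r : ℕ) : ℝ :=
  sSup {c | ∃ X : Matrix (Fin n₁) (Fin n₂) ℝ, X ≠ 0 ∧ X.rank ≤ r ∧ c = vnorm (A X) / frobNorm X}

def mRIC {n₁ n₂ m : ℕ} (A : Matrix (Fin n₁) (Fin n₂) ℝ → (Fin m → ℝ)) (r : ℕ) : ℝ :=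
  sInf {δ : ℝ | 0 < δ ∧ ∀ X : Matrix (Fin n₁) (Fin n₂) ℝ, X ≠ 0 → X.rank ≤ r →
    1 - δ ≤ (vnorm (A X)) ^ 2 / (frobNorm X) ^ 2 ∧ (vnorm (A X)) ^ 2 / (frobNorm X) ^ 2 ≤ 1 + δ}

def opOf {n₁ n₂ m : ℕ} (A : Fin m → Matrix (Fin n₁) (Fin n₂) ℝ) :
    Matrix (Fin n₁) (Fin n₂) ℝ → (Fin m → ℝ) :=
  fun X k => matInner (A k) X


open MeasureTheory ProbabilityTheory

open ContinuousLinearMap (rotation)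

/-!
Expanding `⟨G, X⟩` along the left singular vectors of `X` gives `⟨G, X⟩ ≤ ‖X‖_* ‖G‖₂`, hence the
bound on the supremum. For `E‖G‖₂ ≤ √n₁ + √n₂`, write `‖G‖₂` as the supremum over unit vectors of
the Gaussian process `(u, v) ↦ ⟨Gᵀ u, v⟩`. Its increments are dominated by those of
`(u, v) ↦ ⟨u, g⟩ + ⟨v, h⟩`, with `g` and `h` independent standard Gaussian vectors, because
`2 - 2 ⟨u, u'⟩ ⟨v, v'⟩ ≤ ‖u - u'‖² + ‖v - v'‖²`. The Sudakov–Fernique inequality then yields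
`E‖G‖₂ ≤ E‖g‖ + E‖h‖`. That inequality is proved for the log-sum-exp function in place of the
maximum: rotating one centred Gaussian vector into an independent one, Gaussian integration by parts
expresses the derivative of the expectation through the difference of the two covariances.
-/

section RotationDerivative

variable {E : Type*} [NormedAddCommGroup E] [NormedSpace ℝ E]

lemma hasDerivAt_rotation_apply (z : E × E) (θ : ℝ) :
    HasDerivAt (fun θ ↦ rotation θ z) ((rotation θ z).2, -(rotation θ z).1) θ := by
  simp only [ContinuousLinearMap.rotation_apply]
  refine (((Real.hasDerivAt_cos θ).smul_const z.1).add
    ((Real.hasDerivAt_sin θ).smul_const z.2)).prodMk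
    (((Real.hasDerivAt_sin θ).neg.smul_const z.1).add
    ((Real.hasDerivAt_cos θ).smul_const z.2)) |>.congr_deriv ?_
  ext
  · simp
  · simp; module

lemma norm_rotation_apply_le (θ : ℝ) (z : E × E) : ‖rotation θ z‖ ≤ 2 * ‖z‖ := by
  have hc := Real.abs_cos_le_one θ
  have hs := Real.abs_sin_le_one θ
  have key (a b : ℝ) (ha : |a| ≤ 1) (hb : |b| ≤ 1) : ‖a • z.1 + b • z.2‖ ≤ 2 * ‖z‖ :=
    calc ‖a • z.1 + b • z.2‖ ≤ |a| * ‖z.1‖ + |b| * ‖z.2‖ := by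
          simpa only [norm_smul, Real.norm_eq_abs] using norm_add_le (a • z.1) (b • z.2)
      _ ≤ 1 * ‖z‖ + 1 * ‖z‖ := by gcongr <;> simp [norm_fst_le, norm_snd_le]
      _ = 2 * ‖z‖ := by ring
  simp only [ContinuousLinearMap.rotation_apply]
  exact max_le (key _ _ hc hs) (key _ _ (by simpa using hs) hc)

theorem hasDerivAt_integral_comp_rotation [MeasurableSpace E] [BorelSpace E]
    [SecondCountableTopology E] {ρ : Measure (E × E)} [IsFiniteMeasure ρ] (hρ : MemLp id 2 ρ)
    {Φ : E × E → ℝ} (hΦ : ContDiff ℝ 1 Φ) {C : ℝ} (hC : ∀ z, ‖fderiv ℝ Φ z‖ ≤ C * (1 + ‖z‖))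
    {θ : ℝ} (hint : Integrable (fun z ↦ Φ (rotation θ z)) ρ) :
    HasDerivAt (fun θ ↦ ∫ z, Φ (rotation θ z) ∂ρ)
      (∫ z, fderiv ℝ Φ (rotation θ z) ((rotation θ z).2, -(rotation θ z).1) ∂ρ) θ := by
  have hC₀ : 0 ≤ C := by simpa using (norm_nonneg _).trans (hC 0)
  have : Continuous (fderiv ℝ Φ) := hΦ.continuous_fderiv one_ne_zero
  have hbound : Integrable (fun z ↦ 2 * C * ‖z‖ + 4 * C * ‖z‖ ^ 2) ρ :=
    ((hρ.integrable one_le_two).norm.const_mul _).add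
      ((hρ.integrable_norm_pow two_ne_zero).const_mul _)
  refine (hasDerivAt_integral_of_dominated_loc_of_deriv_le (F := fun θ z ↦ Φ (rotation θ z))
    (F' := fun θ z ↦ fderiv ℝ Φ (rotation θ z) ((rotation θ z).2, -(rotation θ z).1))
    Filter.univ_mem
    (.of_forall fun θ ↦ (hΦ.continuous.comp (rotation θ).continuous).aestronglyMeasurable) hint
    (Continuous.aestronglyMeasurable (by fun_prop)) (.of_forall fun z θ _ ↦ ?_) hbound
    (.of_forall fun z θ _ ↦ ?_)).2
  · set w := rotation θ z
    have hw : ‖w‖ ≤ 2 * ‖z‖ := norm_rotation_apply_le θ z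
    calc ‖fderiv ℝ Φ w (w.2, -w.1)‖ ≤ ‖fderiv ℝ Φ w‖ * ‖(w.2, -w.1)‖ :=
          ContinuousLinearMap.le_opNorm _ _
      _ = ‖fderiv ℝ Φ w‖ * ‖w‖ := by rw [Prod.norm_mk, norm_neg, max_comm, ← Prod.norm_def]
      _ ≤ C * (1 + 2 * ‖z‖) * (2 * ‖z‖) := by gcongr; exact (hC w).trans (by gcongr)
      _ = 2 * C * ‖z‖ + 4 * C * ‖z‖ ^ 2 := by ring
  · exact (hΦ.differentiable one_ne_zero _).hasFDerivAt.comp_hasDerivAt θ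
      (hasDerivAt_rotation_apply z θ)

end RotationDerivative

section QuadraticGrowth

lemma norm_integral_apply_apply_le {F : Type*} [NormedAddCommGroup F] [NormedSpace ℝ F]
    [MeasurableSpace F] {ρ : Measure F} (hρ : Integrable (fun w ↦ ‖w‖ ^ 2) ρ)
    (B : F →L[ℝ] F →L[ℝ] ℝ) : ‖∫ w, B w w ∂ρ‖ ≤ ‖B‖ * ∫ w, ‖w‖ ^ 2 ∂ρ := by
  rw [← integral_const_mul]
  refine norm_integral_le_of_norm_le (hρ.const_mul _) (.of_forall fun w ↦ ?_)
  simpa only [mul_assoc, ← sq] using B.le_opNorm₂ w w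

lemma fderiv_clm_apply_fst_snd {E F G : Type*} [NormedAddCommGroup E] [NormedSpace ℝ E]
    [NormedAddCommGroup F] [NormedSpace ℝ F] [NormedAddCommGroup G] [NormedSpace ℝ G]
    {g : E → F →L[ℝ] G} (hg : Differentiable ℝ g) (z w : E × F) :
    fderiv ℝ (fun z : E × F ↦ g z.1 z.2) z w = fderiv ℝ g z.1 w.1 z.2 + g z.1 w.2 := by
  have hg₁ := (hg z.1).hasFDerivAt.comp z (hasFDerivAt_fst (𝕜 := ℝ) (E := E) (F := F))
  have h := (hg₁.clm_apply (hasFDerivAt_snd (𝕜 := ℝ) (E := E) (F := F))).fderiv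
  simpa [add_comm] using DFunLike.congr_fun h w

variable {E F : Type*} [NormedAddCommGroup E] [NormedSpace ℝ E] [NormedAddCommGroup F]

lemma norm_le_of_norm_fderiv_le {h : E → ℝ} (hh : Differentiable ℝ h) {C : ℝ}
    (hC : ∀ x, ‖fderiv ℝ h x‖ ≤ C) (x : E) :
    ‖h x‖ ≤ ‖h 0‖ + C * ‖x‖ := by
  have hsub : ‖h x - h 0‖ ≤ C * ‖x - 0‖ :=
    convex_univ.norm_image_sub_le_of_norm_fderiv_le (fun y _ ↦ hh y) (fun y _ ↦ hC y)
      (Set.mem_univ _) (Set.mem_univ _)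
  grw [← sub_zero x, ← hsub, sub_zero]
  exact norm_le_norm_add_norm_sub' _ _

variable [MeasurableSpace F] [BorelSpace F]

lemma integrable_of_norm_le_mul_one_add_norm_sq {ρ : Measure F} [IsFiniteMeasure ρ]
    (hρ : MemLp id 2 ρ) {f : F → ℝ} (hf : Continuous f) {C : ℝ}
    (hC : ∀ z, ‖f z‖ ≤ C * (1 + ‖z‖ ^ 2)) : Integrable f ρ :=
  (((integrable_const 1).add (hρ.integrable_norm_pow two_ne_zero)).const_mul C).mono'
    hf.aestronglyMeasurable (.of_forall hC)

variable [NormedSpace ℝ F]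

lemma continuous_integral_apply_apply {X : Type*} [TopologicalSpace X]
    [FirstCountableTopology X] {ρ : Measure F}
    (hρ : Integrable (fun w ↦ ‖w‖ ^ 2) ρ) {B : X → F →L[ℝ] F →L[ℝ] ℝ} (hB : Continuous B)
    {C : ℝ} (hC : ∀ x, ‖B x‖ ≤ C) : Continuous fun x ↦ ∫ w, B x w w ∂ρ := by
  refine continuous_of_dominated (fun x ↦ Continuous.aestronglyMeasurable (by fun_prop))
    (fun x ↦ .of_forall fun w ↦ ?_) (hρ.const_mul C) (.of_forall fun w ↦ by fun_prop)
  grw [(B x).le_opNorm₂ w w, hC x, mul_assoc, ← sq]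

lemma integrable_fderiv_comp_apply {ρ : Measure F} [IsFiniteMeasure ρ] (hρ : MemLp id 2 ρ)
    {h : E → ℝ} (hh : ContDiff ℝ 1 h) {C : ℝ} (hC : ∀ x, ‖fderiv ℝ h x‖ ≤ C) {f : F → E}
    (hf : Continuous f) (L : F →L[ℝ] E) :
    Integrable (fun z ↦ fderiv ℝ h (f z) (L z)) ρ := by
  have hC₀ : 0 ≤ C := (norm_nonneg _).trans (hC 0)
  have : Continuous (fderiv ℝ h) := hh.continuous_fderiv one_ne_zero
  refine integrable_of_norm_le_mul_one_add_norm_sq (C := C * ‖L‖) hρ (by fun_prop) fun z ↦ ?_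
  grw [(fderiv ℝ h _).le_of_opNorm_le (hC _), L.le_opNorm z, ← mul_assoc]
  gcongr
  nlinarith [sq_nonneg (‖z‖ - 1)]

lemma integrable_comp_of_norm_fderiv_le {ρ : Measure F} [IsFiniteMeasure ρ]
    (hρ : Integrable id ρ) {h : E → ℝ} (hh : Differentiable ℝ h) {C : ℝ}
    (hC : ∀ x, ‖fderiv ℝ h x‖ ≤ C) (L : F →L[ℝ] E) : Integrable (fun z ↦ h (L z)) ρ := by
  have hLip (z : F) : ‖h (L z)‖ ≤ ‖h 0‖ + C * ‖L z‖ := norm_le_of_norm_fderiv_le hh hC _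
  exact ((integrable_const _).add ((L.integrable_comp hρ).norm.const_mul C)).mono'
    (hh.continuous.comp L.continuous).aestronglyMeasurable (.of_forall hLip)

end QuadraticGrowth

section GaussianComparison

variable {E : Type*} [NormedAddCommGroup E] [NormedSpace ℝ E] [MeasurableSpace E] [BorelSpace E]
  [SecondCountableTopology E] [CompleteSpace E] {μ ν : Measure E} [IsGaussian μ] [IsGaussian ν]

lemma integral_fderiv_prod_swap_eq_zero (hμ : μ[id] = 0) {Φ : E × E → ℝ} (hΦ : ContDiff ℝ 1 Φ)
    {C : ℝ} (hC : ∀ z, ‖fderiv ℝ Φ z‖ ≤ C * (1 + ‖z‖)) (hint : Integrable Φ (μ.prod μ)) :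
    ∫ z, fderiv ℝ Φ z (z.2, -z.1) ∂(μ.prod μ) = 0 := by
  have hinv (θ : ℝ) : ∫ z, Φ (rotation θ z) ∂(μ.prod μ) = ∫ z, Φ z ∂(μ.prod μ) := by
    have hΦm : AEStronglyMeasurable Φ ((μ.prod μ).map (rotation θ)) :=
      hΦ.continuous.aestronglyMeasurable
    rw [← integral_map (by fun_prop) hΦm, IsGaussian.map_rotation_eq_self hμ]
  have hrot (z : E × E) : rotation (0 : ℝ) z = z := by simp [ContinuousLinearMap.rotation_apply]
  have hderiv := hasDerivAt_integral_comp_rotation (θ := 0) IsGaussian.memLp_two_id hΦ hC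
    (by simpa only [hrot] using hint)
  simp only [hinv, hrot] at hderiv
  exact hderiv.unique (hasDerivAt_const _ _)

theorem integral_apply_self_eq_integral_fderiv (hμ : μ[id] = 0)
    {g : E → E →L[ℝ] ℝ} (hg : ContDiff ℝ 1 g) {C : ℝ} (hC : ∀ x, ‖g x‖ ≤ C)
    (hC' : ∀ x, ‖fderiv ℝ g x‖ ≤ C) :
    ∫ x, g x x ∂μ = ∫ x, ∫ y, fderiv ℝ g x y y ∂μ ∂μ := by
  have hC₀ : 0 ≤ C := (norm_nonneg _).trans (hC 0)
  have hgc := hg.continuous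
  have : Continuous (fderiv ℝ g) := hg.continuous_fderiv one_ne_zero
  have hg_le (x u : E) : ‖g x u‖ ≤ C * ‖u‖ := (g x).le_of_opNorm_le (hC x) u
  have hDg_le (x u v : E) : ‖fderiv ℝ g x u v‖ ≤ C * ‖u‖ * ‖v‖ :=
    ((fderiv ℝ g x).le_opNorm₂ u v).trans (by gcongr; exact hC' x)
  let Φ : E × E → ℝ := fun z ↦ g z.1 z.2
  have hΦ : ContDiff ℝ 1 Φ := (hg.comp contDiff_fst).clm_apply contDiff_snd
  have hDΦ (z w : E × E) : fderiv ℝ Φ z w = fderiv ℝ g z.1 w.1 z.2 + g z.1 w.2 :=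
    fderiv_clm_apply_fst_snd (hg.differentiable one_ne_zero) z w
  have hDΦ_le (z : E × E) : ‖fderiv ℝ Φ z‖ ≤ C * (1 + ‖z‖) := by
    refine ContinuousLinearMap.opNorm_le_bound _ (by positivity) fun w ↦ ?_
    calc ‖fderiv ℝ Φ z w‖ ≤ ‖fderiv ℝ g z.1 w.1 z.2‖ + ‖g z.1 w.2‖ := hDΦ z w ▸ norm_add_le _ _
      _ ≤ C * ‖w‖ * ‖z‖ + C * ‖w‖ := by
        grw [hDg_le, hg_le, norm_fst_le w, norm_snd_le z, norm_snd_le w]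
      _ = C * (1 + ‖z‖) * ‖w‖ := by ring
  have hmem : MemLp id 2 (μ.prod μ) := IsGaussian.memLp_two_id
  have hΦint : Integrable Φ (μ.prod μ) :=
    integrable_of_norm_le_mul_one_add_norm_sq hmem hΦ.continuous fun z ↦ by
      grw [hg_le, norm_snd_le z]
      gcongr
      nlinarith [sq_nonneg (‖z‖ - 1)]
  have hgint : Integrable (fun z : E × E ↦ g z.1 z.1) (μ.prod μ) :=
    integrable_of_norm_le_mul_one_add_norm_sq hmem (by fun_prop) fun z ↦ by
      grw [hg_le, norm_fst_le z]
      gcongr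
      nlinarith [sq_nonneg (‖z‖ - 1)]
  have hDgint : Integrable (fun z : E × E ↦ fderiv ℝ g z.1 z.2 z.2) (μ.prod μ) :=
    integrable_of_norm_le_mul_one_add_norm_sq hmem (by fun_prop) fun z ↦ by
      grw [hDg_le, norm_snd_le z, norm_snd_le z, mul_assoc, ← sq]
      gcongr
      linarith
  have h := integral_fderiv_prod_swap_eq_zero hμ hΦ hDΦ_le hΦint
  simp only [hDΦ, map_neg, ← sub_eq_add_neg] at h
  rw [integral_sub hDgint hgint, integral_prod _ hDgint,
    integral_fun_fst (fun x ↦ g x x), sub_eq_zero] at h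
  simpa using h.symm

/-- The mean of the Hessian form `w ↦ D²h(z)(w, w)` under `μ`. When `μ` is centred with covariance
`Σ` this is `tr (Σ · D²h(z))`, the coordinate-free way to pair `D²h(z)` with `Σ`. -/
def hessianMean (μ : Measure E) (h : E → ℝ) (z : E) : ℝ :=
  ∫ w, fderiv ℝ (fderiv ℝ h) z w w ∂μ

lemma integral_fderiv_smul_add_apply (hμ : μ[id] = 0) {h : E → ℝ} (hh : ContDiff ℝ 2 h) {C : ℝ}
    (hC : ∀ x, ‖fderiv ℝ h x‖ ≤ C) (hC' : ∀ x, ‖fderiv ℝ (fderiv ℝ h) x‖ ≤ C) (a : ℝ) (p : E) :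
    ∫ x, fderiv ℝ h (a • x + p) x ∂μ = a * ∫ x, hessianMean μ h (a • x + p) ∂μ := by
  have hC₀ : 0 ≤ C := (norm_nonneg _).trans (hC 0)
  have hDh : ContDiff ℝ 1 (fderiv ℝ h) := hh.fderiv_right (by norm_num)
  let g : E → E →L[ℝ] ℝ := fun x ↦ fderiv ℝ h (a • x + p)
  have hg : ContDiff ℝ 1 g := hDh.comp (by fun_prop)
  have hDg (x : E) : fderiv ℝ g x = a • fderiv ℝ (fderiv ℝ h) (a • x + p) := by
    have hline : HasFDerivAt (fun x : E ↦ a • x + p) (a • ContinuousLinearMap.id ℝ E) x :=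
      ((hasFDerivAt_id x).const_smul a).add_const _
    refine ((hDh.differentiable one_ne_zero _).hasFDerivAt.comp x hline).fderiv.trans ?_
    rw [ContinuousLinearMap.comp_smul, ContinuousLinearMap.comp_id]
  have hg_le (x : E) : ‖g x‖ ≤ C * (1 + |a|) := by
    grw [hC _]
    nlinarith [abs_nonneg a]
  have hDg_le (x : E) : ‖fderiv ℝ g x‖ ≤ C * (1 + |a|) := by
    grw [hDg, ContinuousLinearMap.opNorm_smul_le, hC', Real.norm_eq_abs]
    linarith
  rw [integral_apply_self_eq_integral_fderiv hμ hg hg_le hDg_le]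
  simp only [hessianMean, hDg, smul_apply, smul_eq_mul, integral_const_mul]

lemma integrable_hessianMean_comp {X : Type*} [TopologicalSpace X] [MeasurableSpace X]
    [OpensMeasurableSpace X] {ρ : Measure X} [IsFiniteMeasure ρ]
    {h : E → ℝ} (hh : ContDiff ℝ 2 h) {C : ℝ}
    (hC : ∀ x, ‖fderiv ℝ (fderiv ℝ h) x‖ ≤ C) {f : X → E} (hf : Continuous f) :
    Integrable (fun x ↦ hessianMean μ h (f x)) ρ := by
  have hDDh : Continuous (fderiv ℝ (fderiv ℝ h)) :=
    (hh.fderiv_right (m := 1) (by norm_num)).continuous_fderiv one_ne_zero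
  have hsq : Integrable (fun w : E ↦ ‖w‖ ^ 2) μ :=
    IsGaussian.memLp_two_id.integrable_norm_pow two_ne_zero
  exact .of_bound ((continuous_integral_apply_apply hsq hDDh hC).comp hf).aestronglyMeasurable
    (C * ∫ w, ‖w‖ ^ 2 ∂μ) (.of_forall fun z ↦ by
      grw [hessianMean, norm_integral_apply_apply_le hsq, hC _])

lemma integral_fderiv_smul_add_smul_apply_fst (hμ : μ[id] = 0) {h : E → ℝ} (hh : ContDiff ℝ 2 h)
    {C : ℝ} (hC : ∀ x, ‖fderiv ℝ h x‖ ≤ C) (hC' : ∀ x, ‖fderiv ℝ (fderiv ℝ h) x‖ ≤ C) (a b : ℝ) :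
    ∫ z : E × E, fderiv ℝ h (a • z.1 + b • z.2) z.1 ∂(μ.prod ν) =
      a * ∫ z : E × E, hessianMean μ h (a • z.1 + b • z.2) ∂(μ.prod ν) := by
  have hint : Integrable (fun z : E × E ↦ fderiv ℝ h (a • z.1 + b • z.2) z.1) (μ.prod ν) :=
    integrable_fderiv_comp_apply IsGaussian.memLp_two_id (hh.of_le one_le_two) hC (by fun_prop)
      (.fst ℝ E E)
  rw [integral_prod_symm _ hint,
    integral_prod_symm _ (integrable_hessianMean_comp hh hC' (by fun_prop)),
    ← integral_const_mul]
  congr with y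
  exact integral_fderiv_smul_add_apply hμ hh hC hC' a (b • y)

lemma integral_fderiv_smul_add_smul_apply_snd (hν : ν[id] = 0) {h : E → ℝ} (hh : ContDiff ℝ 2 h)
    {C : ℝ} (hC : ∀ x, ‖fderiv ℝ h x‖ ≤ C) (hC' : ∀ x, ‖fderiv ℝ (fderiv ℝ h) x‖ ≤ C) (a b : ℝ) :
    ∫ z : E × E, fderiv ℝ h (a • z.1 + b • z.2) z.2 ∂(μ.prod ν) =
      b * ∫ z : E × E, hessianMean ν h (a • z.1 + b • z.2) ∂(μ.prod ν) := by
  have h := integral_fderiv_smul_add_smul_apply_fst (ν := μ) hν hh hC hC' b a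
  rw [← integral_prod_swap, ← integral_prod_swap (ν := μ)] at h
  simpa only [Prod.fst_swap, Prod.snd_swap, add_comm] using h

lemma hasDerivAt_integral_comp_rotation_fst (hμ : μ[id] = 0) (hν : ν[id] = 0)
    {h : E → ℝ} (hh : ContDiff ℝ 2 h) {C : ℝ}
    (hC : ∀ x, ‖fderiv ℝ h x‖ ≤ C) (hC' : ∀ x, ‖fderiv ℝ (fderiv ℝ h) x‖ ≤ C) (θ : ℝ) :
    HasDerivAt (fun θ ↦ ∫ z, h (rotation θ z).1 ∂(μ.prod ν))
      (Real.sin θ * Real.cos θ * (∫ z, hessianMean ν h (rotation θ z).1 ∂(μ.prod ν) -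
        ∫ z, hessianMean μ h (rotation θ z).1 ∂(μ.prod ν))) θ := by
  have hmem : MemLp id 2 (μ.prod ν) := IsGaussian.memLp_two_id
  have hh₁ : ContDiff ℝ 1 h := hh.of_le one_le_two
  let Φ : E × E → ℝ := fun z ↦ h z.1
  have hDΦ (z : E × E) : fderiv ℝ Φ z = (fderiv ℝ h z.1).comp (.fst ℝ E E) :=
    ((hh.differentiable two_ne_zero z.1).hasFDerivAt.comp z hasFDerivAt_fst).fderiv
  have hDΦ_le (z : E × E) : ‖fderiv ℝ Φ z‖ ≤ C * (1 + ‖z‖) := by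
    have hC₀ : 0 ≤ C := (norm_nonneg _).trans (hC 0)
    grw [hDΦ, ContinuousLinearMap.opNorm_comp_le, hC, ContinuousLinearMap.norm_fst_le]
    gcongr
    linarith [norm_nonneg z]
  have hΦint : Integrable (fun z ↦ Φ (rotation θ z)) (μ.prod ν) :=
    integrable_comp_of_norm_fderiv_le (hmem.integrable one_le_two) (hh.differentiable two_ne_zero)
      hC ((ContinuousLinearMap.fst ℝ E E).comp (rotation θ))
  refine (hasDerivAt_integral_comp_rotation hmem (hh₁.comp contDiff_fst) hDΦ_le
    hΦint).congr_deriv ?_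
  let D (z : E × E) : E →L[ℝ] ℝ := fderiv ℝ h (rotation θ z).1
  have hDint (L : E × E →L[ℝ] E) : Integrable (fun z ↦ D z (L z)) (μ.prod ν) :=
    integrable_fderiv_comp_apply hmem hh₁ hC (by fun_prop) L
  have hDfst : Integrable (fun z ↦ D z z.1) (μ.prod ν) := hDint (.fst ℝ E E)
  have hDsnd : Integrable (fun z ↦ D z z.2) (μ.prod ν) := hDint (.snd ℝ E E)
  calc ∫ z, fderiv ℝ Φ (rotation θ z) ((rotation θ z).2, -(rotation θ z).1) ∂(μ.prod ν)
    _ = ∫ z, (Real.cos θ * D z z.2 - Real.sin θ * D z z.1) ∂(μ.prod ν) := by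
      congr with z
      simp only [hDΦ, D, ContinuousLinearMap.rotation_apply, ContinuousLinearMap.comp_apply,
        ContinuousLinearMap.coe_fst', map_add, map_smul, smul_eq_mul]
      ring
    _ = Real.cos θ * ∫ z, D z z.2 ∂(μ.prod ν) - Real.sin θ * ∫ z, D z z.1 ∂(μ.prod ν) := by
      rw [integral_sub (hDsnd.const_mul _) (hDfst.const_mul _), integral_const_mul,
        integral_const_mul]
    _ = _ := by
      simp only [D, ContinuousLinearMap.rotation_apply,
        integral_fderiv_smul_add_smul_apply_fst hμ hh hC hC',
        integral_fderiv_smul_add_smul_apply_snd hν hh hC hC']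
      ring

theorem integral_le_integral_of_hessianMean_le (hμ : μ[id] = 0) (hν : ν[id] = 0)
    {h : E → ℝ} (hh : ContDiff ℝ 2 h) {C : ℝ}
    (hC : ∀ x, ‖fderiv ℝ h x‖ ≤ C) (hC' : ∀ x, ‖fderiv ℝ (fderiv ℝ h) x‖ ≤ C)
    (hle : ∀ z, hessianMean μ h z ≤ hessianMean ν h z) :
    ∫ x, h x ∂μ ≤ ∫ x, h x ∂ν := by
  let φ : ℝ → ℝ := fun θ ↦ ∫ z, h (rotation θ z).1 ∂(μ.prod ν)
  have hφ := hasDerivAt_integral_comp_rotation_fst hμ hν hh hC hC'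
  have hmono : MonotoneOn φ (Set.Icc 0 (Real.pi / 2)) := by
    refine monotoneOn_of_hasDerivWithinAt_nonneg (convex_Icc _ _)
      (fun θ _ ↦ (hφ θ).continuousAt.continuousWithinAt)
      (fun θ _ ↦ (hφ θ).hasDerivWithinAt) fun θ hθ ↦ ?_
    rw [interior_Icc] at hθ
    have hsin : 0 ≤ Real.sin θ :=
      Real.sin_nonneg_of_nonneg_of_le_pi hθ.1.le (by linarith [hθ.2, Real.pi_pos])
    have hcos : 0 ≤ Real.cos θ :=
      Real.cos_nonneg_of_mem_Icc ⟨by linarith [hθ.1, Real.pi_pos], hθ.2.le⟩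
    exact mul_nonneg (mul_nonneg hsin hcos) <| sub_nonneg.2 <|
      integral_mono (integrable_hessianMean_comp hh hC' (by fun_prop))
        (integrable_hessianMean_comp hh hC' (by fun_prop)) fun z ↦ hle _
  have hzero : φ 0 = ∫ x, h x ∂μ := by
    simpa [φ, ContinuousLinearMap.rotation_apply] using integral_fun_fst (μ := μ) (ν := ν) h
  have hpi : φ (Real.pi / 2) = ∫ x, h x ∂ν := by
    simpa [φ, ContinuousLinearMap.rotation_apply] using integral_fun_snd (μ := μ) (ν := ν) h
  rw [← hzero, ← hpi]
  exact hmono ⟨le_rfl, by positivity⟩ ⟨by positivity, le_rfl⟩ (by positivity)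

end GaussianComparison

section LogSumExp

variable {ι : Type*} [Fintype ι] {β : ℝ}

/-- The log-sum-exp function `β⁻¹ log ∑ᵢ exp (β xᵢ)` at inverse temperature `β`, a smooth
approximation of `maxᵢ xᵢ` as `β → ∞`. -/
def logSumExp (β : ℝ) (x : ι → ℝ) : ℝ := β⁻¹ * Real.log (∑ i, Real.exp (β * x i))

/-- The Gibbs weights at inverse temperature `β`, which form the gradient of `logSumExp β`. -/
def softmax (β : ℝ) (x : ι → ℝ) (i : ι) : ℝ := Real.exp (β * x i) / ∑ j, Real.exp (β * x j)

lemma softmax_nonneg (x : ι → ℝ) (i : ι) : 0 ≤ softmax β x i := by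
  unfold softmax; positivity

variable [Nonempty ι]

lemma sum_exp_mul_pos (x : ι → ℝ) : 0 < ∑ i, Real.exp (β * x i) :=
  Finset.sum_pos (fun _ _ ↦ Real.exp_pos _) Finset.univ_nonempty

lemma sum_softmax (x : ι → ℝ) : ∑ i, softmax β x i = 1 := by
  simp only [softmax, ← Finset.sum_div, div_self (sum_exp_mul_pos x).ne']

lemma softmax_eq_exp (hβ : β ≠ 0) (x : ι → ℝ) (i : ι) :
    softmax β x i = Real.exp (β * (x i - logSumExp β x)) := by
  rw [logSumExp, mul_sub, mul_inv_cancel_left₀ hβ, Real.exp_sub, Real.exp_log (sum_exp_mul_pos x),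
    softmax]

lemma ciSup_le_logSumExp (hβ : 0 < β) (x : ι → ℝ) : ⨆ i, x i ≤ logSumExp β x := by
  refine ciSup_le fun i ↦ ?_
  rw [logSumExp, ← mul_le_mul_iff_right₀ hβ, mul_inv_cancel_left₀ hβ.ne', ← Real.log_exp (β * x i)]
  gcongr
  exact Finset.single_le_sum (f := fun i ↦ Real.exp (β * x i)) (fun _ _ ↦ by positivity)
    (Finset.mem_univ i)

lemma logSumExp_le (hβ : 0 < β) (x : ι → ℝ) :
    logSumExp β x ≤ (⨆ i, x i) + Real.log (Fintype.card ι) / β := by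
  have hsum : ∑ i, Real.exp (β * x i) ≤ Fintype.card ι * Real.exp (β * ⨆ i, x i) := by
    rw [← nsmul_eq_mul, ← Finset.card_univ]
    refine Finset.sum_le_card_nsmul _ _ _ fun i _ ↦ ?_
    gcongr
    exact le_ciSup (Finite.bddAbove_range x) i
  calc logSumExp β x
    _ ≤ β⁻¹ * Real.log (Fintype.card ι * Real.exp (β * ⨆ i, x i)) := by
      unfold logSumExp; gcongr
    _ = (⨆ i, x i) + Real.log (Fintype.card ι) / β := by
      rw [Real.log_mul (by simp) (Real.exp_ne_zero _), Real.log_exp]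
      field_simp
      ring

lemma contDiff_logSumExp {n : WithTop ℕ∞} : ContDiff ℝ n (logSumExp (ι := ι) β) :=
  contDiff_const.mul (ContDiff.log (by fun_prop) fun x ↦ (sum_exp_mul_pos x).ne')

lemma fderiv_logSumExp (hβ : β ≠ 0) (x : ι → ℝ) :
    fderiv ℝ (logSumExp β) x =
      ∑ i, softmax β x i • ContinuousLinearMap.proj (R := ℝ) (φ := fun _ : ι ↦ ℝ) i := by
  have hexp (i : ι) := ((hasFDerivAt_apply (𝕜 := ℝ) (F' := fun _ : ι ↦ ℝ) i x).const_mul β).exp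
  have h := ((HasFDerivAt.fun_sum fun i (_ : i ∈ Finset.univ) ↦ hexp i).log
    (sum_exp_mul_pos x).ne').const_mul β⁻¹
  refine h.fderiv.trans ?_
  simp only [Finset.smul_sum, smul_smul, softmax]
  congr! 2 with i
  field_simp

lemma hasFDerivAt_softmax (hβ : β ≠ 0) (x : ι → ℝ) (i : ι) :
    HasFDerivAt (softmax β · i)
      ((β * softmax β x i) • (.proj i - fderiv ℝ (logSumExp β) x)) x := by
  have hlse := (contDiff_logSumExp (n := 1) (β := β)).differentiable one_ne_zero x
  have h := (((hasFDerivAt_apply (𝕜 := ℝ) (F' := fun _ : ι ↦ ℝ) i x).sub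
    hlse.hasFDerivAt).const_mul β).exp
  simp only [Pi.sub_apply, ← softmax_eq_exp hβ] at h
  simpa only [smul_smul, mul_comm β] using h

lemma fderiv_fderiv_logSumExp_apply (hβ : β ≠ 0) (x v w : ι → ℝ) :
    fderiv ℝ (fderiv ℝ (logSumExp β)) x v w = β * (∑ i, softmax β x i * (v i * w i) -
      (∑ i, softmax β x i * v i) * ∑ i, softmax β x i * w i) := by
  have h := HasFDerivAt.fun_sum fun i (_ : i ∈ Finset.univ) ↦
    (hasFDerivAt_softmax hβ x i).smul_const
      (ContinuousLinearMap.proj (R := ℝ) (φ := fun _ : ι ↦ ℝ) i)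
  rw [funext (fderiv_logSumExp hβ), h.fderiv, fderiv_logSumExp hβ]
  calc _ = ∑ i, β * softmax β x i * (v i - ∑ j, softmax β x j * v j) * w i := by simp
    _ = ∑ i, (β * (softmax β x i * (v i * w i)) -
        β * (∑ j, softmax β x j * v j) * (softmax β x i * w i)) := by
      congr with i
      ring
    _ = _ := by rw [Finset.sum_sub_distrib, ← Finset.mul_sum, ← Finset.mul_sum, mul_sub, mul_assoc]

lemma fderiv_fderiv_logSumExp_apply_self (hβ : β ≠ 0) (x w : ι → ℝ) :
    fderiv ℝ (fderiv ℝ (logSumExp β)) x w w =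
      β / 2 * ∑ i, ∑ j, softmax β x i * softmax β x j * (w i - w j) ^ 2 := by
  have hexpand : ∑ i, ∑ j, softmax β x i * softmax β x j * (w i - w j) ^ 2 =
      (∑ i, softmax β x i * (w i * w i)) * (∑ j, softmax β x j) +
        (∑ i, softmax β x i) * (∑ j, softmax β x j * (w j * w j)) -
        2 * ((∑ i, softmax β x i * w i) * ∑ j, softmax β x j * w j) := by
    simp only [Finset.sum_mul_sum]
    simp only [Finset.mul_sum, ← Finset.sum_add_distrib, ← Finset.sum_sub_distrib]
    congr! 2 with i _ j
    ring
  rw [fderiv_fderiv_logSumExp_apply hβ, hexpand, sum_softmax]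
  ring

lemma abs_sum_softmax_mul_le (x : ι → ℝ) {a : ι → ℝ} {C : ℝ} (ha : ∀ i, |a i| ≤ C) :
    |∑ i, softmax β x i * a i| ≤ C :=
  calc |∑ i, softmax β x i * a i|
    _ ≤ ∑ i, |softmax β x i * a i| := Finset.abs_sum_le_sum_abs _ _
    _ ≤ ∑ i, softmax β x i * C := by
      gcongr with i
      rw [abs_mul, abs_of_nonneg (softmax_nonneg x i)]
      gcongr
      exacts [softmax_nonneg x i, ha i]
    _ = C := by rw [← Finset.sum_mul, sum_softmax, one_mul]

lemma norm_fderiv_logSumExp_le (hβ : β ≠ 0) (x : ι → ℝ) : ‖fderiv ℝ (logSumExp β) x‖ ≤ 1 := by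
  refine ContinuousLinearMap.opNorm_le_bound _ zero_le_one fun w ↦ ?_
  simpa [fderiv_logSumExp hβ] using abs_sum_softmax_mul_le x fun i ↦ norm_le_pi_norm w i

lemma norm_fderiv_fderiv_logSumExp_le (hβ : 0 < β) (x : ι → ℝ) :
    ‖fderiv ℝ (fderiv ℝ (logSumExp β)) x‖ ≤ 2 * β := by
  refine ContinuousLinearMap.opNorm_le_bound₂ _ (by positivity) fun v w ↦ ?_
  have hvw : |∑ i, softmax β x i * (v i * w i)| ≤ ‖v‖ * ‖w‖ :=
    abs_sum_softmax_mul_le x fun i ↦ by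
      grw [abs_mul, ← norm_le_pi_norm v i, ← norm_le_pi_norm w i]; rfl
  have hv : |∑ i, softmax β x i * v i| ≤ ‖v‖ := abs_sum_softmax_mul_le x (norm_le_pi_norm v)
  have hw : |∑ i, softmax β x i * w i| ≤ ‖w‖ := abs_sum_softmax_mul_le x (norm_le_pi_norm w)
  rw [fderiv_fderiv_logSumExp_apply hβ.ne', Real.norm_eq_abs, abs_mul, abs_of_pos hβ]
  grw [abs_sub, abs_mul, hvw, hv, hw]
  exact le_of_eq (by ring)

end LogSumExp

section SudakovFernique

variable {ι : Type*}

lemma integrable_iSup_of_integrable [Finite ι] {Ω : Type*} {mΩ : MeasurableSpace Ω}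
    {P : Measure Ω} {X : ι → Ω → ℝ} (hX : ∀ i, Integrable (X i) P) :
    Integrable (fun ω ↦ ⨆ i, X i ω) P := by
  have := Fintype.ofFinite ι
  rcases isEmpty_or_nonempty ι
  · simp only [Real.iSup_of_isEmpty]
    exact integrable_zero _ _ _
  refine (integrable_finsetSum Finset.univ fun i _ ↦ (hX i).abs).mono'
    (AEMeasurable.iSup fun i ↦ (hX i).aemeasurable).aestronglyMeasurable (.of_forall fun ω ↦ ?_)
  obtain ⟨i, hi⟩ := exists_eq_ciSup_of_finite (f := fun i ↦ X i ω)
  rw [← hi]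
  exact Finset.single_le_sum (f := fun i ↦ |X i ω|) (fun _ _ ↦ abs_nonneg _) (Finset.mem_univ i)

lemma integral_id_map_pi_eq_zero [Fintype ι] {Ω : Type*} {mΩ : MeasurableSpace Ω} {P : Measure Ω}
    {X : ι → Ω → ℝ} (hX : ∀ i, Integrable (X i) P) (hX₀ : ∀ i, P[X i] = 0) :
    (P.map fun ω i ↦ X i ω)[id] = 0 := by
  rw [integral_map (aemeasurable_pi_lambda _ fun i ↦ (hX i).aemeasurable) (by fun_prop)]
  ext i
  simpa only [id_eq, eval_integral hX, Pi.zero_apply] using hX₀ i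

lemma integral_ciSup_map [Countable ι] {Ω : Type*} {_ : MeasurableSpace Ω} {P : Measure Ω}
    {X : Ω → ι → ℝ} (hX : AEMeasurable X P) :
    ∫ x, ⨆ i, x i ∂(P.map X) = ∫ ω, ⨆ i, X ω i ∂P :=
  integral_map hX (Measurable.iSup measurable_pi_apply).aestronglyMeasurable

lemma integral_sub_sq_map {Ω : Type*} {mΩ : MeasurableSpace Ω} {P : Measure Ω}
    {X : Ω → ι → ℝ} (hX : AEMeasurable X P) (i j : ι) :
    ∫ x, (x i - x j) ^ 2 ∂(P.map X) = ∫ ω, (X ω i - X ω j) ^ 2 ∂P :=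
  integral_map hX (by fun_prop)

variable [Fintype ι] {β : ℝ}

lemma hessianMean_logSumExp [Nonempty ι] (hβ : β ≠ 0) (μ : Measure (ι → ℝ)) [IsGaussian μ]
    (z : ι → ℝ) :
    hessianMean μ (logSumExp β) z =
      β / 2 * ∑ i, ∑ j, softmax β z i * softmax β z j * ∫ w, (w i - w j) ^ 2 ∂μ := by
  have hint (i j : ι) : Integrable (fun w : ι → ℝ ↦ (w i - w j) ^ 2) μ :=
    (IsGaussian.memLp_dual μ (.proj i - .proj j) 2 (by simp)).integrable_sq
  simp only [hessianMean, fderiv_fderiv_logSumExp_apply_self hβ]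
  rw [integral_const_mul, integral_finsetSum _ fun i _ ↦
    integrable_finsetSum _ fun j _ ↦ (hint i j).const_mul _]
  congr! 2 with i
  rw [integral_finsetSum _ fun j _ ↦ (hint i j).const_mul _]
  simp only [integral_const_mul]

variable {μ ν : Measure (ι → ℝ)} [IsGaussian μ] [IsGaussian ν]

lemma integrable_logSumExp [Nonempty ι] (hβ : β ≠ 0) : Integrable (logSumExp β) μ :=
  integrable_comp_of_norm_fderiv_le IsGaussian.integrable_id
    (contDiff_logSumExp.differentiable one_ne_zero) (norm_fderiv_logSumExp_le hβ) (.id ℝ _)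

lemma integral_logSumExp_le [Nonempty ι] (hβ : 0 < β) (hμ : μ[id] = 0) (hν : ν[id] = 0)
    (hle : ∀ i j, ∫ x, (x i - x j) ^ 2 ∂μ ≤ ∫ x, (x i - x j) ^ 2 ∂ν) :
    ∫ x, logSumExp β x ∂μ ≤ ∫ x, logSumExp β x ∂ν := by
  refine integral_le_integral_of_hessianMean_le hμ hν contDiff_logSumExp
    (fun x ↦ (norm_fderiv_logSumExp_le hβ.ne' x).trans (le_max_left 1 (2 * β)))
    (fun x ↦ (norm_fderiv_fderiv_logSumExp_le hβ x).trans (le_max_right 1 (2 * β))) fun z ↦ ?_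
  rw [hessianMean_logSumExp hβ.ne', hessianMean_logSumExp hβ.ne']
  gcongr β / 2 * ∑ i, ∑ j, softmax β z i * softmax β z j * ?_ with i _ j _
  exacts [mul_nonneg (softmax_nonneg z i) (softmax_nonneg z j), hle i j]

theorem integral_ciSup_le_integral_ciSup [Nonempty ι] (hμ : μ[id] = 0) (hν : ν[id] = 0)
    (hle : ∀ i j, ∫ x, (x i - x j) ^ 2 ∂μ ≤ ∫ x, (x i - x j) ^ 2 ∂ν) :
    ∫ x, ⨆ i, x i ∂μ ≤ ∫ x, ⨆ i, x i ∂ν := by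
  have hint (ρ : Measure (ι → ℝ)) [IsGaussian ρ] : Integrable (fun x : ι → ℝ ↦ ⨆ i, x i) ρ :=
    integrable_iSup_of_integrable fun i ↦ IsGaussian.integrable_dual ρ (.proj i)
  have hbound (β : ℝ) (hβ : 0 < β) :
      ∫ x, ⨆ i, x i ∂μ ≤ ∫ x, ⨆ i, x i ∂ν + Real.log (Fintype.card ι) / β :=
    calc ∫ x, ⨆ i, x i ∂μ
      _ ≤ ∫ x, logSumExp β x ∂μ :=
        integral_mono (hint μ) (integrable_logSumExp hβ.ne') (ciSup_le_logSumExp hβ)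
      _ ≤ ∫ x, logSumExp β x ∂ν := integral_logSumExp_le hβ hμ hν hle
      _ ≤ ∫ x, ((⨆ i, x i) + Real.log (Fintype.card ι) / β) ∂ν :=
        integral_mono (integrable_logSumExp hβ.ne') ((hint ν).add (integrable_const _))
          (logSumExp_le hβ)
      _ = ∫ x, ⨆ i, x i ∂ν + Real.log (Fintype.card ι) / β := by
        simp [integral_add (hint ν) (integrable_const _)]
  have hlim : Filter.Tendsto (fun β ↦ ∫ x, ⨆ i, x i ∂ν + Real.log (Fintype.card ι) / β)
      Filter.atTop (nhds (∫ x, ⨆ i, x i ∂ν)) := by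
    simpa using (tendsto_const_nhds (x := ∫ x, ⨆ i, x i ∂ν)).add
      (tendsto_const_nhds.div_atTop Filter.tendsto_id)
  exact ge_of_tendsto hlim ((Filter.eventually_gt_atTop 0).mono hbound)

theorem sudakov_fernique {ι : Type*} [Finite ι] {Ω Ω' : Type*} {mΩ : MeasurableSpace Ω}
    {mΩ' : MeasurableSpace Ω'} {P : Measure Ω} {P' : Measure Ω'}
    {X : ι → Ω → ℝ} {Y : ι → Ω' → ℝ}
    (hX : HasGaussianLaw (fun ω i ↦ X i ω) P) (hY : HasGaussianLaw (fun ω i ↦ Y i ω) P')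
    (hX₀ : ∀ i, P[X i] = 0) (hY₀ : ∀ i, P'[Y i] = 0)
    (hle : ∀ i j, ∫ ω, (X i ω - X j ω) ^ 2 ∂P ≤ ∫ ω, (Y i ω - Y j ω) ^ 2 ∂P') :
    ∫ ω, ⨆ i, X i ω ∂P ≤ ∫ ω, ⨆ i, Y i ω ∂P' := by
  have := Fintype.ofFinite ι
  rcases isEmpty_or_nonempty ι
  · simp only [Real.iSup_of_isEmpty, integral_zero, le_refl]
  have := hX.isGaussian_map
  have := hY.isGaussian_map
  have h := integral_ciSup_le_integral_ciSup (μ := P.map fun ω i ↦ X i ω)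
    (ν := P'.map fun ω i ↦ Y i ω)
    (integral_id_map_pi_eq_zero (fun i ↦ (hX.eval i).integrable) hX₀)
    (integral_id_map_pi_eq_zero (fun i ↦ (hY.eval i).integrable) hY₀) fun i j ↦ by
      simpa only [integral_sub_sq_map hX.aemeasurable, integral_sub_sq_map hY.aemeasurable]
        using hle i j
  simpa only [integral_ciSup_map hX.aemeasurable, integral_ciSup_map hY.aemeasurable] using h

end SudakovFernique

section OperatorNorm

open scoped InnerProductSpace

variable {E F : Type*} [NormedAddCommGroup E] [InnerProductSpace ℝ E]
  [NormedAddCommGroup F] [InnerProductSpace ℝ F]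

lemma inner_apply_le_inner_apply_add (A : E →L[ℝ] F) {u : E} (hu : ‖u‖ = 1) (u' : E) (v : F)
    {v' : F} (hv' : ‖v'‖ = 1) :
    ⟪A u, v⟫_ℝ ≤ ⟪A u', v'⟫_ℝ + (‖u - u'‖ + ‖v - v'‖) * ‖A‖ := by
  have hsplit : ⟪A u, v⟫_ℝ = ⟪A u', v'⟫_ℝ + (⟪A (u - u'), v'⟫_ℝ + ⟪A u, v - v'⟫_ℝ) := by
    rw [map_sub, inner_sub_left, inner_sub_right]
    ring
  rw [hsplit]
  grw [real_inner_le_norm (A (u - u')), real_inner_le_norm (A u), A.le_opNorm, A.le_opNorm]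
  rw [hu, hv']
  exact le_of_eq (by ring)

lemma opNorm_le_iSup_inner_add (A : E →L[ℝ] F) {T : Finset (E × F)}
    (hT : ∀ p ∈ T, ‖p.1‖ = 1 ∧ ‖p.2‖ = 1) {ε : ℝ} (hε : 0 ≤ ε)
    (hnet : ∀ u v, ‖u‖ = 1 → ‖v‖ = 1 → ∃ p ∈ T, dist (u, v) p ≤ ε) :
    ‖A‖ ≤ (⨆ p : T, ⟪A p.1.1, p.1.2⟫_ℝ) + 2 * ε * ‖A‖ := by
  set M : ℝ := (⨆ p : T, ⟪A p.1.1, p.1.2⟫_ℝ) + 2 * ε * ‖A‖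
  have hM (u : E) (v : F) (hu : ‖u‖ = 1) (hv : ‖v‖ = 1) : ⟪A u, v⟫_ℝ ≤ M := by
    obtain ⟨p, hp, huv⟩ := hnet u v hu hv
    rw [Prod.dist_eq, max_le_iff, dist_eq_norm, dist_eq_norm] at huv
    have hsup : ⟪A p.1, p.2⟫_ℝ ≤ ⨆ p : T, ⟪A p.1.1, p.1.2⟫_ℝ :=
      le_ciSup (f := fun p : T ↦ ⟪A p.1.1, p.1.2⟫_ℝ) (Finite.bddAbove_range _) ⟨p, hp⟩
    grw [inner_apply_le_inner_apply_add A hu p.1 v (hT p hp).2, hsup, huv.1, huv.2, ← two_mul]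
  refine A.opNorm_le_of_re_inner_le ?_ fun u v hu hv ↦ hM u v hu hv
  rcases isEmpty_or_nonempty T with hempty | ⟨⟨p, hp⟩⟩
  · simp only [M, Real.iSup_of_isEmpty]
    positivity
  · have hpos := hM p.1 p.2 (hT p hp).1 (hT p hp).2
    have hneg := hM p.1 (-p.2) (hT p hp).1 (by rw [norm_neg, (hT p hp).2])
    rw [inner_neg_right] at hneg
    linarith

variable (E F) in
lemma exists_finset_opNorm_le_iSup_inner_add [FiniteDimensional ℝ E] [FiniteDimensional ℝ F]
    {ε : ℝ} (hε : 0 < ε) :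
    ∃ T : Finset (E × F), (∀ p ∈ T, ‖p.1‖ = 1 ∧ ‖p.2‖ = 1) ∧
      ∀ A : E →L[ℝ] F, ‖A‖ ≤ (⨆ p : T, ⟪A p.1.1, p.1.2⟫_ℝ) + 2 * ε * ‖A‖ := by
  have := FiniteDimensional.proper_real E
  have := FiniteDimensional.proper_real F
  obtain ⟨T, hT, hfin, hcover⟩ := ((isCompact_sphere (0 : E) 1).prod
    (isCompact_sphere (0 : F) 1)).finite_cover_balls hε
  lift T to Finset (E × F) using hfin
  have hT₁ (p) (hp : p ∈ T) : ‖p.1‖ = 1 ∧ ‖p.2‖ = 1 := by simpa using hT hp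
  refine ⟨T, hT₁, fun A ↦ opNorm_le_iSup_inner_add A hT₁ hε.le fun u v hu hv ↦ ?_⟩
  obtain ⟨p, hp, hdist⟩ := Set.mem_iUnion₂.1 (hcover (show (u, v) ∈ _ by simp [hu, hv]))
  exact ⟨p, hp, (Metric.mem_ball.1 hdist).le⟩

end OperatorNorm

section IsotropicOperator

open scoped InnerProductSpace

variable {E F : Type*}
  [NormedAddCommGroup E] [InnerProductSpace ℝ E] [NormedAddCommGroup F] [InnerProductSpace ℝ F]
  {Ω : Type*} {mΩ : MeasurableSpace Ω} {P : Measure Ω} {A : Ω → E →L[ℝ] F}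

lemma norm_toLp_sub_toLp_sq {p q : E × F} (hp : ‖p.1‖ = 1 ∧ ‖p.2‖ = 1)
    (hq : ‖q.1‖ = 1 ∧ ‖q.2‖ = 1) :
    ‖WithLp.toLp 2 p - WithLp.toLp 2 q‖ ^ 2 = 4 - 2 * ⟪p.1, q.1⟫_ℝ - 2 * ⟪p.2, q.2⟫_ℝ := by
  rw [← WithLp.toLp_sub, WithLp.prod_norm_sq_eq_of_L2, WithLp.toLp_fst, WithLp.toLp_snd,
    Prod.fst_sub, Prod.snd_sub, norm_sub_sq_real, norm_sub_sq_real, hp.1, hp.2, hq.1, hq.2]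
  ring

lemma hasGaussianLaw_inner_apply (hA : HasGaussianLaw A P) {ι : Type*} [Finite ι] (u : ι → E)
    (v : ι → F) : HasGaussianLaw (fun ω i ↦ ⟪A ω (u i), v i⟫_ℝ) P := by
  have := Fintype.ofFinite ι
  have h := hA.map (.pi fun i ↦ innerSL ℝ (v i) ∘L .apply ℝ F (u i))
  simpa [Function.comp_def, real_inner_comm] using h

lemma memLp_inner_apply (hA : HasGaussianLaw A P) (u : E) (v : F) :
    MemLp (fun ω ↦ ⟪A ω u, v⟫_ℝ) 2 P :=
  ((hasGaussianLaw_inner_apply hA (fun _ : Unit ↦ u) (fun _ ↦ v)).eval ()).memLp_two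

lemma integral_inner_apply_sub_inner_apply_sq (hA : HasGaussianLaw A P)
    (hcov : ∀ u u' v v', ∫ ω, ⟪A ω u, v⟫_ℝ * ⟪A ω u', v'⟫_ℝ ∂P = ⟪u, u'⟫_ℝ * ⟪v, v'⟫_ℝ)
    {u u' : E} {v v' : F} (hu : ‖u‖ = 1) (hu' : ‖u'‖ = 1) (hv : ‖v‖ = 1) (hv' : ‖v'‖ = 1) :
    ∫ ω, (⟪A ω u, v⟫_ℝ - ⟪A ω u', v'⟫_ℝ) ^ 2 ∂P = 2 - 2 * (⟪u, u'⟫_ℝ * ⟪v, v'⟫_ℝ) := by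
  have hint (u u' v v') : Integrable (fun ω ↦ ⟪A ω u, v⟫_ℝ * ⟪A ω u', v'⟫_ℝ) P :=
    (memLp_inner_apply hA u v).integrable_mul (memLp_inner_apply hA u' v')
  have hexpand (ω : Ω) : (⟪A ω u, v⟫_ℝ - ⟪A ω u', v'⟫_ℝ) ^ 2 =
      ⟪A ω u, v⟫_ℝ * ⟪A ω u, v⟫_ℝ + ⟪A ω u', v'⟫_ℝ * ⟪A ω u', v'⟫_ℝ -
        2 * (⟪A ω u, v⟫_ℝ * ⟪A ω u', v'⟫_ℝ) := by ring
  have hadd : Integrable (fun ω ↦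
      ⟪A ω u, v⟫_ℝ * ⟪A ω u, v⟫_ℝ + ⟪A ω u', v'⟫_ℝ * ⟪A ω u', v'⟫_ℝ) P :=
    (hint u u v v).add (hint u' u' v' v')
  simp only [hexpand]
  rw [integral_sub hadd ((hint u u' v v').const_mul 2),
    integral_add (hint u u v v) (hint u' u' v' v'), integral_const_mul, hcov, hcov, hcov]
  simp only [real_inner_self_eq_norm_sq, hu, hu', hv, hv']
  norm_num

variable [FiniteDimensional ℝ E] [FiniteDimensional ℝ F]

lemma integral_norm_le_sqrt_finrank [IsProbabilityMeasure P] {X : Ω → E} (hX : MemLp X 2 P)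
    (hiso : ∀ u, ‖u‖ = 1 → ∫ ω, ⟪u, X ω⟫_ℝ ^ 2 ∂P = 1) :
    ∫ ω, ‖X ω‖ ∂P ≤ √(Module.finrank ℝ E) := by
  let b := stdOrthonormalBasis ℝ E
  have hsq : ∫ ω, ‖X ω‖ ^ 2 ∂P = Module.finrank ℝ E :=
    calc ∫ ω, ‖X ω‖ ^ 2 ∂P
      _ = ∫ ω, ∑ i, ⟪b i, X ω⟫_ℝ ^ 2 ∂P := by
        simp only [← b.sum_sq_norm_inner_right, Real.norm_eq_abs, sq_abs]
      _ = ∑ i, ∫ ω, ⟪b i, X ω⟫_ℝ ^ 2 ∂P :=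
        integral_finsetSum _ fun i _ ↦ (hX.const_inner (b i)).integrable_sq
      _ = Module.finrank ℝ E := by simp [hiso _ (b.norm_eq_one _)]
  refine Real.le_sqrt_of_sq_le ?_
  have hvar := variance_nonneg (fun ω ↦ ‖X ω‖) P
  rw [variance_eq_sub hX.norm] at hvar
  rw [← hsq]
  exact sub_nonneg.1 hvar

section StdGaussian

variable [MeasurableSpace E] [BorelSpace E] [MeasurableSpace F] [BorelSpace F]

lemma integral_inner_mul_inner_stdGaussian (u v : E) :
    ∫ x, ⟪u, x⟫_ℝ * ⟪v, x⟫_ℝ ∂(stdGaussian E) = ⟪u, v⟫_ℝ := by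
  have h := covarianceBilin_apply (μ := stdGaussian E) IsGaussian.memLp_two_id u v
  simpa only [covarianceBilin_stdGaussian, innerSL_apply_apply ℝ, id_eq, integral_id_stdGaussian,
    sub_zero] using h.symm

lemma integral_inner_sub_inner_sq_stdGaussian (u v : E) :
    ∫ x, (⟪u, x⟫_ℝ - ⟪v, x⟫_ℝ) ^ 2 ∂(stdGaussian E) = ‖u - v‖ ^ 2 := by
  simp only [← inner_sub_left, pow_two, integral_inner_mul_inner_stdGaussian,
    real_inner_self_eq_norm_mul_norm]

lemma hasGaussianLaw_inner_stdGaussian {ι : Type*} [Finite ι] (u : ι → E) :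
    HasGaussianLaw (fun x i ↦ ⟪u i, x⟫_ℝ) (stdGaussian E) :=
  have := Fintype.ofFinite ι
  IsGaussian.hasGaussianLaw_id.map (.pi fun i ↦ innerSL ℝ (u i))

lemma integral_norm_fst_stdGaussian_le :
    ∫ x, ‖x.fst‖ ∂(stdGaussian (WithLp 2 (E × F))) ≤ √(Module.finrank ℝ E) := by
  refine integral_norm_le_sqrt_finrank
    ((IsGaussian.hasGaussianLaw_id.map_fun (WithLp.fstL 2 ℝ E F)).memLp_two) fun u hu ↦ ?_
  have h := integral_inner_mul_inner_stdGaussian (WithLp.toLp 2 (u, (0 : F))) (WithLp.toLp 2 (u, 0))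
  simpa [hu, WithLp.prod_inner_apply, ← pow_two] using h

lemma integral_norm_snd_stdGaussian_le :
    ∫ x, ‖x.snd‖ ∂(stdGaussian (WithLp 2 (E × F))) ≤ √(Module.finrank ℝ F) := by
  refine integral_norm_le_sqrt_finrank
    ((IsGaussian.hasGaussianLaw_id.map_fun (WithLp.sndL 2 ℝ E F)).memLp_two) fun u hu ↦ ?_
  have h := integral_inner_mul_inner_stdGaussian (WithLp.toLp 2 ((0 : E), u)) (WithLp.toLp 2 (0, u))
  simpa [hu, WithLp.prod_inner_apply, ← pow_two] using h

lemma integral_iSup_inner_stdGaussian_le {T : Finset (E × F)}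
    (hT : ∀ p ∈ T, ‖p.1‖ = 1 ∧ ‖p.2‖ = 1) :
    ∫ x, ⨆ p : T, ⟪WithLp.toLp 2 p.1, x⟫_ℝ ∂(stdGaussian (WithLp 2 (E × F))) ≤
      √(Module.finrank ℝ E) + √(Module.finrank ℝ F) := by
  have hfst : Integrable (fun x ↦ ‖x.fst‖) (stdGaussian (WithLp 2 (E × F))) :=
    (IsGaussian.hasGaussianLaw_id.map_fun (WithLp.fstL 2 ℝ E F)).integrable.norm
  have hsnd : Integrable (fun x ↦ ‖x.snd‖) (stdGaussian (WithLp 2 (E × F))) :=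
    (IsGaussian.hasGaussianLaw_id.map_fun (WithLp.sndL 2 ℝ E F)).integrable.norm
  have hle (x : WithLp 2 (E × F)) :
      ⨆ p : T, ⟪WithLp.toLp 2 p.1, x⟫_ℝ ≤ ‖x.fst‖ + ‖x.snd‖ := by
    refine Real.iSup_le (fun ⟨p, hp⟩ ↦ ?_) (by positivity)
    rw [WithLp.prod_inner_apply]
    grw [real_inner_le_norm, real_inner_le_norm]
    simp [hT p hp]
  have hsup : Integrable (fun x ↦ ⨆ p : T, ⟪WithLp.toLp 2 p.1, x⟫_ℝ)
      (stdGaussian (WithLp 2 (E × F))) :=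
    integrable_iSup_of_integrable fun p ↦
      ((hasGaussianLaw_inner_stdGaussian fun p : T ↦ WithLp.toLp 2 p.1).eval p).integrable
  grw [integral_mono hsup (hfst.add hsnd) hle, integral_add' hfst hsnd,
    integral_norm_fst_stdGaussian_le, integral_norm_snd_stdGaussian_le]

end StdGaussian

lemma integral_inner_apply_eq_zero (hA : HasGaussianLaw A P) (hA₀ : P[A] = 0) (u : E) (v : F) :
    ∫ ω, ⟪A ω u, v⟫_ℝ ∂P = 0 := by
  have hint : Integrable A P := hA.integrable
  have h := (innerSL ℝ v ∘L ContinuousLinearMap.apply ℝ F u).integral_comp_comm hint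
  simpa [hA₀, real_inner_comm] using h

lemma integral_iSup_inner_apply_le (hA : HasGaussianLaw A P) (hA₀ : P[A] = 0)
    (hcov : ∀ u u' v v', ∫ ω, ⟪A ω u, v⟫_ℝ * ⟪A ω u', v'⟫_ℝ ∂P = ⟪u, u'⟫_ℝ * ⟪v, v'⟫_ℝ)
    {T : Finset (E × F)} (hT : ∀ p ∈ T, ‖p.1‖ = 1 ∧ ‖p.2‖ = 1) :
    ∫ ω, ⨆ p : T, ⟪A ω p.1.1, p.1.2⟫_ℝ ∂P ≤
      √(Module.finrank ℝ E) + √(Module.finrank ℝ F) := by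
  borelize E F
  refine (sudakov_fernique (hasGaussianLaw_inner_apply hA _ _)
    (hasGaussianLaw_inner_stdGaussian fun p : T ↦ WithLp.toLp 2 p.1)
    (fun p ↦ integral_inner_apply_eq_zero hA hA₀ _ _)
    (fun p ↦ integral_strongDual_stdGaussian (innerSL ℝ (WithLp.toLp 2 p.1)))
    fun ⟨p, hp⟩ ⟨q, hq⟩ ↦ ?_).trans (integral_iSup_inner_stdGaussian_le hT)
  obtain ⟨hp₁, hp₂⟩ := hT p hp
  obtain ⟨hq₁, hq₂⟩ := hT q hq
  rw [integral_inner_apply_sub_inner_apply_sq hA hcov hp₁ hq₁ hp₂ hq₂,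
    integral_inner_sub_inner_sq_stdGaussian, norm_toLp_sub_toLp_sq ⟨hp₁, hp₂⟩ ⟨hq₁, hq₂⟩]
  have h₁ : ⟪p.1, q.1⟫_ℝ ≤ 1 := by simpa [hp₁, hq₁] using real_inner_le_norm p.1 q.1
  have h₂ : ⟪p.2, q.2⟫_ℝ ≤ 1 := by simpa [hp₂, hq₂] using real_inner_le_norm p.2 q.2
  nlinarith [mul_nonneg (sub_nonneg.2 h₁) (sub_nonneg.2 h₂)]

theorem integral_opNorm_le (hA : HasGaussianLaw A P) (hA₀ : P[A] = 0)
    (hcov : ∀ u u' v v', ∫ ω, ⟪A ω u, v⟫_ℝ * ⟪A ω u', v'⟫_ℝ ∂P = ⟪u, u'⟫_ℝ * ⟪v, v'⟫_ℝ) :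
    ∫ ω, ‖A ω‖ ∂P ≤ √(Module.finrank ℝ E) + √(Module.finrank ℝ F) := by
  set K := √(Module.finrank ℝ E) + √(Module.finrank ℝ F)
  have hnorm : Integrable (fun ω ↦ ‖A ω‖) P := hA.integrable.norm
  have hbound (ε : ℝ) (hε : 0 < ε) : ∫ ω, ‖A ω‖ ∂P ≤ K + 2 * ε * ∫ ω, ‖A ω‖ ∂P := by
    obtain ⟨T, hT, hnet⟩ := exists_finset_opNorm_le_iSup_inner_add E F hε
    have hsup : Integrable (fun ω ↦ ⨆ p : T, ⟪A ω p.1.1, p.1.2⟫_ℝ) P :=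
      integrable_iSup_of_integrable fun p ↦
        ((hasGaussianLaw_inner_apply hA (fun p : T ↦ p.1.1) fun p ↦ p.1.2).eval p).integrable
    calc ∫ ω, ‖A ω‖ ∂P
      _ ≤ ∫ ω, (⨆ p : T, ⟪A ω p.1.1, p.1.2⟫_ℝ) + 2 * ε * ‖A ω‖ ∂P :=
        integral_mono hnorm (hsup.add (hnorm.const_mul _)) fun ω ↦ hnet (A ω)
      _ = ∫ ω, ⨆ p : T, ⟪A ω p.1.1, p.1.2⟫_ℝ ∂P + 2 * ε * ∫ ω, ‖A ω‖ ∂P := by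
        rw [integral_add hsup (hnorm.const_mul _), integral_const_mul]
      _ ≤ K + 2 * ε * ∫ ω, ‖A ω‖ ∂P := by
        gcongr
        exact integral_iSup_inner_apply_le hA hA₀ hcov hT
  have hlim : Filter.Tendsto (fun ε ↦ K + 2 * ε * ∫ ω, ‖A ω‖ ∂P) (nhdsWithin 0 (Set.Ioi 0))
      (nhds K) :=
    tendsto_nhdsWithin_of_tendsto_nhds (Continuous.tendsto' (by fun_prop) _ _ (by simp))
  exact ge_of_tendsto hlim (eventually_mem_nhdsWithin.mono hbound)

end IsotropicOperator

section MatrixNorms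

open scoped InnerProductSpace Matrix

variable {n₁ n₂ : ℕ} {τ : ℝ} (G X : Matrix (Fin n₁) (Fin n₂) ℝ)

/-- The operator `u ↦ Gᵀ u` between Euclidean spaces, linear in the matrix `G`. The transpose is
chosen because `singVals G` is defined from `G Gᴴ`, so that `singVals G i ^ 2 = ‖Gᵀ bᵢ‖ ^ 2` for an
eigenbasis `b` of `G Gᴴ`. -/
def transposeCLM : Matrix (Fin n₁) (Fin n₂) ℝ ≃ₗ[ℝ]
    (EuclideanSpace ℝ (Fin n₁) →L[ℝ] EuclideanSpace ℝ (Fin n₂)) :=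
  Matrix.transposeLinearEquiv (Fin n₁) (Fin n₂) ℝ ℝ ≪≫ₗ Matrix.toEuclideanLin ≪≫ₗ
    LinearMap.toContinuousLinearMap

lemma transposeCLM_apply (u : EuclideanSpace ℝ (Fin n₁)) :
    transposeCLM G u = WithLp.toLp 2 (Gᵀ *ᵥ u) := rfl

lemma inner_transposeCLM_transposeCLM (u w : EuclideanSpace ℝ (Fin n₁)) :
    ⟪transposeCLM X u, transposeCLM G w⟫_ℝ = ⟪u, WithLp.toLp 2 ((X * Gᵀ) *ᵥ w)⟫_ℝ := by
  simp only [transposeCLM_apply, EuclideanSpace.inner_eq_star_dotProduct, star_trivial]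
  rw [← Matrix.mulVec_mulVec, Matrix.mulVec_transpose X, dotProduct_comm,
    ← Matrix.dotProduct_mulVec, dotProduct_comm]

/-- The orthonormal basis of left singular vectors of `G`, that is, of eigenvectors of `G Gᴴ`. -/
def leftSingularBasis : OrthonormalBasis (Fin n₁) ℝ (EuclideanSpace ℝ (Fin n₁)) :=
  (Matrix.isHermitian_mul_conjTranspose_self G).eigenvectorBasis

lemma singVals_nonneg (i : Fin n₁) : 0 ≤ singVals G i := Real.sqrt_nonneg _

lemma singVals_sq (i : Fin n₁) :
    singVals G i ^ 2 = (Matrix.isHermitian_mul_conjTranspose_self G).eigenvalues i :=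
  Real.sq_sqrt (Matrix.eigenvalues_self_mul_conjTranspose_nonneg G i)

lemma inner_transposeCLM_leftSingularBasis (u : EuclideanSpace ℝ (Fin n₁)) (i : Fin n₁) :
    ⟪transposeCLM G u, transposeCLM G (leftSingularBasis G i)⟫_ℝ =
      singVals G i ^ 2 * ⟪u, leftSingularBasis G i⟫_ℝ := by
  rw [inner_transposeCLM_transposeCLM, ← Matrix.conjTranspose_eq_transpose_of_trivial,
    leftSingularBasis, Matrix.IsHermitian.mulVec_eigenvectorBasis, WithLp.toLp_smul,
    inner_smul_right, singVals_sq]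

lemma singVals_eq_norm (i : Fin n₁) :
    singVals G i = ‖transposeCLM G (leftSingularBasis G i)‖ := by
  have h := inner_transposeCLM_leftSingularBasis G (leftSingularBasis G i) i
  rw [real_inner_self_eq_norm_sq, real_inner_self_eq_norm_sq, OrthonormalBasis.norm_eq_one,
    one_pow, mul_one] at h
  exact ((sq_eq_sq₀ (norm_nonneg _) (singVals_nonneg G i)).1 h).symm

lemma norm_transposeCLM_sq (u : EuclideanSpace ℝ (Fin n₁)) :
    ‖transposeCLM G u‖ ^ 2 = ∑ i, singVals G i ^ 2 * ⟪u, leftSingularBasis G i⟫_ℝ ^ 2 := by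
  rw [← real_inner_self_eq_norm_sq, inner_transposeCLM_transposeCLM,
    ← (leftSingularBasis G).sum_inner_mul_inner]
  refine Finset.sum_congr rfl fun i _ ↦ ?_
  rw [← inner_transposeCLM_transposeCLM, real_inner_comm (transposeCLM G u),
    inner_transposeCLM_leftSingularBasis]
  ring

lemma matOpNorm_nonneg : 0 ≤ matOpNorm G :=
  Real.iSup_nonneg (singVals_nonneg G)

lemma singVals_le_matOpNorm (i : Fin n₁) : singVals G i ≤ matOpNorm G :=
  le_ciSup (Set.finite_range _).bddAbove i

lemma matOpNorm_eq_norm : matOpNorm G = ‖transposeCLM G‖ := by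
  refine le_antisymm (Real.iSup_le (fun i ↦ ?_) (norm_nonneg _)) ?_
  · rw [singVals_eq_norm]
    exact (transposeCLM G).unit_le_opNorm _ (OrthonormalBasis.norm_eq_one _ i).le
  refine ContinuousLinearMap.opNorm_le_bound _ (matOpNorm_nonneg G) fun u ↦
    le_of_sq_le_sq ?_ (mul_nonneg (matOpNorm_nonneg G) (norm_nonneg u))
  calc ‖transposeCLM G u‖ ^ 2
    _ = ∑ i, singVals G i ^ 2 * ⟪u, leftSingularBasis G i⟫_ℝ ^ 2 := norm_transposeCLM_sq G u
    _ ≤ ∑ i, matOpNorm G ^ 2 * ⟪u, leftSingularBasis G i⟫_ℝ ^ 2 := by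
      gcongr with i
      · exact singVals_nonneg G i
      · exact singVals_le_matOpNorm G i
    _ = (matOpNorm G * ‖u‖) ^ 2 := by
      rw [← Finset.mul_sum, mul_pow, ← (leftSingularBasis G).sum_sq_norm_inner_left u]
      simp only [Real.norm_eq_abs, sq_abs]

lemma matInner_eq_sum_inner (b : OrthonormalBasis (Fin n₁) ℝ (EuclideanSpace ℝ (Fin n₁))) :
    matInner G X = ∑ i, ⟪transposeCLM X (b i), transposeCLM G (b i)⟫_ℝ := by
  simp_rw [inner_transposeCLM_transposeCLM]
  rw [matInner, Matrix.trace_mul_comm, ← Matrix.trace_toLin_eq (X * Gᵀ)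
    (EuclideanSpace.basisFun (Fin n₁) ℝ).toBasis, LinearMap.trace_eq_sum_inner _ b]
  rfl

lemma matInner_le_nuclearNorm_mul_matOpNorm : matInner G X ≤ nuclearNorm X * matOpNorm G :=
  calc matInner G X
    _ = ∑ i, ⟪transposeCLM X (leftSingularBasis X i), transposeCLM G (leftSingularBasis X i)⟫_ℝ :=
      matInner_eq_sum_inner G X _
    _ ≤ ∑ i, singVals X i * matOpNorm G := by
      gcongr with i
      grw [real_inner_le_norm, ← singVals_eq_norm, matOpNorm_eq_norm,
        (transposeCLM G).unit_le_opNorm _ (OrthonormalBasis.norm_eq_one _ i).le]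
      exact singVals_nonneg X i
    _ = nuclearNorm X * matOpNorm G := by rw [nuclearNorm, Finset.sum_mul]

variable (τ) in
/-- The support function at `G` of the set `{X | ‖X‖_F = 1, ‖X‖_*² ≤ τ}`; it is `0` if that set is
empty. -/
def supMatInner : ℝ :=
  sSup {c | ∃ X : Matrix (Fin n₁) (Fin n₂) ℝ,
    frobNorm X = 1 ∧ nuclearNorm X ^ 2 ≤ τ ∧ c = matInner G X}

lemma matInner_le_sqrt_mul_matOpNorm {X : Matrix (Fin n₁) (Fin n₂) ℝ}
    (hX : nuclearNorm X ^ 2 ≤ τ) : matInner G X ≤ √τ * matOpNorm G := by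
  have hG := matOpNorm_nonneg G
  grw [matInner_le_nuclearNorm_mul_matOpNorm, Real.le_sqrt_of_sq_le hX]

lemma supMatInner_le : supMatInner τ G ≤ √τ * matOpNorm G := by
  refine Real.sSup_le ?_ (mul_nonneg (Real.sqrt_nonneg _) (matOpNorm_nonneg G))
  rintro _ ⟨X, -, hX, rfl⟩
  exact matInner_le_sqrt_mul_matOpNorm G hX

lemma matInner_le_supMatInner {X : Matrix (Fin n₁) (Fin n₂) ℝ} (hX₁ : frobNorm X = 1)
    (hX : nuclearNorm X ^ 2 ≤ τ) : matInner G X ≤ supMatInner τ G := by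
  refine le_csSup ⟨√τ * matOpNorm G, ?_⟩ ⟨X, hX₁, hX, rfl⟩
  rintro _ ⟨Y, -, hY, rfl⟩
  exact matInner_le_sqrt_mul_matOpNorm G hY

lemma supMatInner_zero : supMatInner τ (0 : Matrix (Fin n₁) (Fin n₂) ℝ) = 0 := by
  have hzero (c) (hc : c ∈ {c | ∃ X : Matrix (Fin n₁) (Fin n₂) ℝ,
      frobNorm X = 1 ∧ nuclearNorm X ^ 2 ≤ τ ∧ c = matInner 0 X}) : c = 0 := by
    obtain ⟨X, -, -, rfl⟩ := hc
    simp [matInner]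
  exact le_antisymm (Real.sSup_nonpos fun c hc ↦ (hzero c hc).le)
    (Real.sSup_nonneg fun c hc ↦ (hzero c hc).ge)

lemma supMatInner_le_add (H : Matrix (Fin n₁) (Fin n₂) ℝ) :
    supMatInner τ G ≤ supMatInner τ H + √τ * matOpNorm (G - H) := by
  have hGH := matOpNorm_nonneg (G - H)
  rcases Set.eq_empty_or_nonempty
    {X : Matrix (Fin n₁) (Fin n₂) ℝ | frobNorm X = 1 ∧ nuclearNorm X ^ 2 ≤ τ} with hτ | ⟨X₀, h₁, h₂⟩
  · have hzero (M : Matrix (Fin n₁) (Fin n₂) ℝ) : supMatInner τ M = 0 := by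
      refine (congrArg sSup (Set.eq_empty_iff_forall_notMem.2 ?_)).trans Real.sSup_empty
      rintro _ ⟨X, hX₁, hX, -⟩
      exact Set.eq_empty_iff_forall_notMem.1 hτ X ⟨hX₁, hX⟩
    rw [hzero, hzero]
    positivity
  · refine csSup_le ⟨_, X₀, h₁, h₂, rfl⟩ ?_
    rintro _ ⟨X, hX₁, hX, rfl⟩
    calc matInner G X
      _ = matInner H X + matInner (G - H) X := by simp [matInner, Matrix.sub_mul]
      _ ≤ supMatInner τ H + √τ * matOpNorm (G - H) :=
        add_le_add (matInner_le_supMatInner H hX₁ hX) (matInner_le_sqrt_mul_matOpNorm _ hX)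

lemma lipschitzWith_supMatInner_transposeCLM_symm :
    LipschitzWith (√τ).toNNReal fun A : EuclideanSpace ℝ (Fin n₁) →L[ℝ]
      EuclideanSpace ℝ (Fin n₂) ↦ supMatInner τ (transposeCLM.symm A) := by
  refine LipschitzWith.of_le_add_mul _ fun A B ↦ ?_
  have h := supMatInner_le_add (τ := τ) (transposeCLM.symm A) (transposeCLM.symm B)
  rw [matOpNorm_eq_norm, map_sub, LinearEquiv.apply_symm_apply, LinearEquiv.apply_symm_apply,
    ← dist_eq_norm] at h
  rwa [Real.coe_toNNReal _ (Real.sqrt_nonneg τ)]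

end MatrixNorms

section GaussianMatrix

open scoped InnerProductSpace

lemma hasGaussianLaw_toLp_pi {ι : Type*} [Fintype ι] :
    HasGaussianLaw (WithLp.toLp 2 : (ι → ℝ) → EuclideanSpace ℝ ι)
      (Measure.pi fun _ ↦ gaussianReal 0 1) where
  isGaussian_map := by rw [map_pi_eq_stdGaussian]; infer_instance

lemma integral_toLp_pi {ι : Type*} [Fintype ι] {E : Type*} [NormedAddCommGroup E]
    [NormedSpace ℝ E] {f : EuclideanSpace ℝ ι → E} (hf : Continuous f) :
    ∫ ω, f (WithLp.toLp 2 ω) ∂(Measure.pi fun _ ↦ gaussianReal 0 1) =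
      ∫ x, f x ∂(stdGaussian (EuclideanSpace ℝ ι)) := by
  rw [← map_pi_eq_stdGaussian, integral_map (by fun_prop) hf.aestronglyMeasurable]

variable {n₁ n₂ : ℕ}

variable (n₁ n₂) in
/-- The operator `transposeCLM` of the matrix with given entries, as a continuous linear function
of the entries. -/
def entriesToCLM : EuclideanSpace ℝ (Fin n₁ × Fin n₂) →L[ℝ]
    EuclideanSpace ℝ (Fin n₁) →L[ℝ] EuclideanSpace ℝ (Fin n₂) :=
  LinearMap.toContinuousLinearMap <|
    transposeCLM.toLinearMap ∘ₗ (Matrix.ofLinearEquiv ℝ).toLinearMap ∘ₗ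
      (LinearEquiv.curry ℝ ℝ (Fin n₁) (Fin n₂)).toLinearMap ∘ₗ
        (WithLp.linearEquiv 2 ℝ (Fin n₁ × Fin n₂ → ℝ)).toLinearMap

lemma entriesToCLM_toLp (ω : Fin n₁ × Fin n₂ → ℝ) :
    entriesToCLM n₁ n₂ (WithLp.toLp 2 ω) = transposeCLM (Matrix.of fun i j ↦ ω (i, j)) := rfl

/-- The rank-one tensor `u ⊗ v`, with entries `uᵢ vⱼ`. -/
def rankOneEntries (u : EuclideanSpace ℝ (Fin n₁)) (v : EuclideanSpace ℝ (Fin n₂)) :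
    EuclideanSpace ℝ (Fin n₁ × Fin n₂) :=
  WithLp.toLp 2 fun p ↦ u p.1 * v p.2

lemma inner_entriesToCLM_apply (x : EuclideanSpace ℝ (Fin n₁ × Fin n₂))
    (u : EuclideanSpace ℝ (Fin n₁)) (v : EuclideanSpace ℝ (Fin n₂)) :
    ⟪entriesToCLM n₁ n₂ x u, v⟫_ℝ = ⟪rankOneEntries u v, x⟫_ℝ := by
  have hx := entriesToCLM_toLp x.ofLp
  rw [WithLp.toLp_ofLp] at hx
  simp only [hx, transposeCLM_apply, rankOneEntries, PiLp.inner_apply, Matrix.mulVec, dotProduct,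
    Matrix.transpose_apply, Matrix.of_apply, Fintype.sum_prod_type_right, RCLike.inner_apply,
    conj_trivial, Finset.mul_sum]
  exact Finset.sum_congr rfl fun j _ ↦ Finset.sum_congr rfl fun i _ ↦ by ring

lemma inner_rankOneEntries (u u' : EuclideanSpace ℝ (Fin n₁)) (v v' : EuclideanSpace ℝ (Fin n₂)) :
    ⟪rankOneEntries u v, rankOneEntries u' v'⟫_ℝ = ⟪u, u'⟫_ℝ * ⟪v, v'⟫_ℝ := by
  simp only [rankOneEntries, PiLp.inner_apply, RCLike.inner_apply, conj_trivial,
    Fintype.sum_prod_type, Finset.sum_mul_sum]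
  exact Finset.sum_congr rfl fun i _ ↦ Finset.sum_congr rfl fun j _ ↦ by ring

lemma integral_norm_entriesToCLM_le :
    ∫ x, ‖entriesToCLM n₁ n₂ x‖ ∂(stdGaussian (EuclideanSpace ℝ (Fin n₁ × Fin n₂))) ≤
      √n₁ + √n₂ := by
  have hG : HasGaussianLaw (entriesToCLM n₁ n₂)
      (stdGaussian (EuclideanSpace ℝ (Fin n₁ × Fin n₂))) :=
    IsGaussian.hasGaussianLaw_id.map (entriesToCLM n₁ n₂)
  have hmean :
      ∫ x, entriesToCLM n₁ n₂ x ∂(stdGaussian (EuclideanSpace ℝ (Fin n₁ × Fin n₂))) = 0 := by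
    rw [(entriesToCLM n₁ n₂).integral_comp_comm IsGaussian.integrable_fun_id]
    simp [integral_id_stdGaussian]
  simpa using integral_opNorm_le hG hmean fun u u' v v' ↦ by
    simp only [inner_entriesToCLM_apply, integral_inner_mul_inner_stdGaussian,
      inner_rankOneEntries]

lemma matOpNorm_eq_norm_entriesToCLM (ω : Fin n₁ × Fin n₂ → ℝ) :
    matOpNorm (Matrix.of fun i j ↦ ω (i, j)) = ‖entriesToCLM n₁ n₂ (WithLp.toLp 2 ω)‖ := by
  rw [matOpNorm_eq_norm, entriesToCLM_toLp]

lemma integrable_matOpNorm_pi :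
    Integrable (fun ω ↦ matOpNorm (Matrix.of fun i j ↦ ω (i, j)))
      (Measure.pi fun _ : Fin n₁ × Fin n₂ ↦ gaussianReal 0 1) := by
  simp only [matOpNorm_eq_norm_entriesToCLM]
  exact (hasGaussianLaw_toLp_pi.map_fun (entriesToCLM n₁ n₂)).integrable.norm

lemma integral_matOpNorm_pi_le :
    ∫ ω, matOpNorm (Matrix.of fun i j ↦ ω (i, j))
      ∂(Measure.pi fun _ : Fin n₁ × Fin n₂ ↦ gaussianReal 0 1) ≤ √n₁ + √n₂ := by
  simp only [matOpNorm_eq_norm_entriesToCLM]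
  rw [integral_toLp_pi (entriesToCLM n₁ n₂).continuous.norm]
  exact integral_norm_entriesToCLM_le

lemma integrable_supMatInner_pi (τ : ℝ) :
    Integrable (fun ω ↦ supMatInner τ (Matrix.of fun i j ↦ ω (i, j)))
      (Measure.pi fun _ : Fin n₁ × Fin n₂ ↦ gaussianReal 0 1) := by
  have hG := (hasGaussianLaw_toLp_pi.map_fun (entriesToCLM n₁ n₂)).memLp (p := 1) (by simp)
  have h := lipschitzWith_supMatInner_transposeCLM_symm (τ := τ).comp_memLp
    (by simp [supMatInner_zero]) hG
  simpa only [Function.comp_def, entriesToCLM_toLp, LinearEquiv.symm_apply_apply,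
    memLp_one_iff_integrable] using h

end GaussianMatrix

/-- `sup {⟨G,X⟩ : ‖X‖_F = 1, ‖X‖_*² ≤ τ} ≤ √τ·‖G‖₂`, and for a standard
Gaussian matrix `G`, `E[sup ⟨G,X⟩] ≤ √τ·E‖G‖₂ ≤ 2√τ·√n₂`. -/
theorem stmt17 {n₁ n₂ : ℕ} (hn : n₁ ≤ n₂) (τ : ℝ) (hτ1 : 1 ≤ τ) (hτ2 : τ ≤ (n₁ : ℝ)) :
    (∀ G : Matrix (Fin n₁) (Fin n₂) ℝ,
      sSup {c | ∃ X : Matrix (Fin n₁) (Fin n₂) ℝ,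
          frobNorm X = 1 ∧ nuclearNorm X ^ 2 ≤ τ ∧ c = matInner G X} ≤
        Real.sqrt τ * matOpNorm G) ∧
    (∫ ω, sSup {c | ∃ X : Matrix (Fin n₁) (Fin n₂) ℝ,
          frobNorm X = 1 ∧ nuclearNorm X ^ 2 ≤ τ ∧
          c = matInner (Matrix.of fun i j => ω (i, j)) X}
        ∂(Measure.pi fun _ : Fin n₁ × Fin n₂ => gaussianReal 0 1)) ≤
      Real.sqrt τ * (∫ ω, matOpNorm (Matrix.of fun i j => ω (i, j))
        ∂(Measure.pi fun _ : Fin n₁ × Fin n₂ => gaussianReal 0 1)) ∧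
    Real.sqrt τ * (∫ ω, matOpNorm (Matrix.of fun i j => ω (i, j))
        ∂(Measure.pi fun _ : Fin n₁ × Fin n₂ => gaussianReal 0 1)) ≤
      2 * Real.sqrt τ * Real.sqrt n₂ := by
  refine ⟨supMatInner_le, ?_, ?_⟩
  · rw [← integral_const_mul]
    exact integral_mono (integrable_supMatInner_pi τ) (integrable_matOpNorm_pi.const_mul _)
      fun ω ↦ supMatInner_le _
  · have hsqrt : √n₁ ≤ √n₂ := by gcongr
    grw [integral_matOpNorm_pi_le, hsqrt]
    exact le_of_eq (by ring)

end
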